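/- For every n ≥ 4, if a polytope P realizes the type D_n model, then P is not combinatorially equivalent to the nestohedron P_B of any connected building set B on any ground set [m]. (That is, generalized associahedra of type D_n are not nestohedra for n ≥ 4.) -/

import Mathlib

open Pointwise

namespace GalD

/-- A polytope in `ℝ^d`: the convex hull of a finite set of points. -/
def IsPolytope {d : ℕ} (P : Set (Fin d → ℝ)) : Prop :=
  ∃ V : Finset (Fin d → ℝ), P = convexHull ℝ (V : Set (Fin d → ℝ))

/-- A face of `P`: a nonempty exposed face of `P` (`P` itself included). -/
def IsFaceOf {d : ℕ} (F P : Set (Fin d → ℝ)) : Prop :=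
  F.Nonempty ∧ IsExposed ℝ P F

/-- The dimension of a set: the rank of the direction of its affine span. -/
noncomputable def polyDim {d : ℕ} (P : Set (Fin d → ℝ)) : ℕ :=
  Module.finrank ℝ (affineSpan ℝ P).direction

/-- A facet: a face of dimension `dim P - 1`. -/
def IsFacetOf {d : ℕ} (F P : Set (Fin d → ℝ)) : Prop :=
  IsFaceOf F P ∧ polyDim F + 1 = polyDim P

/-- A vertex: a point spanning a face of dimension 0. -/
def IsVertexOf {d : ℕ} (v : Fin d → ℝ) (P : Set (Fin d → ℝ)) : Prop :=
  IsFaceOf {v} P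

/-- A simple polytope: every vertex is contained in exactly `dim P` facets. -/
def IsSimplePolytope {d : ℕ} (P : Set (Fin d → ℝ)) : Prop :=
  IsPolytope P ∧ ∀ v, IsVertexOf v P →
    {F : Set (Fin d → ℝ) | IsFacetOf F P ∧ v ∈ F}.ncard = polyDim P

/-- A flag polytope: simple, and every collection of pairwise intersecting facets
has a nonempty common intersection. -/
def IsFlagPolytope {d : ℕ} (P : Set (Fin d → ℝ)) : Prop :=
  IsSimplePolytope P ∧
  ∀ 𝒮 : Set (Set (Fin d → ℝ)), 𝒮.Nonempty → (∀ F ∈ 𝒮, IsFacetOf F P) →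
    (∀ F ∈ 𝒮, ∀ G ∈ 𝒮, (F ∩ G).Nonempty) → (⋂₀ 𝒮).Nonempty

/-- Combinatorial equivalence: an order isomorphism between the face posets. -/
def CombEquiv {d₁ d₂ : ℕ} (P : Set (Fin d₁ → ℝ)) (Q : Set (Fin d₂ → ℝ)) : Prop :=
  Nonempty ({F : Set (Fin d₁ → ℝ) // IsFaceOf F P} ≃o
            {G : Set (Fin d₂ → ℝ) // IsFaceOf G Q})

/-- The product of a set in `ℝ^{d₁}` and a set in `ℝ^{d₂}`, inside `ℝ^{d₁+d₂}`. -/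
def polyProd {d₁ d₂ : ℕ} (Q : Set (Fin d₁ → ℝ)) (R : Set (Fin d₂ → ℝ)) :
    Set (Fin (d₁ + d₂) → ℝ) :=
  {x | (fun i => x (Fin.castAdd d₂ i)) ∈ Q ∧ (fun j => x (Fin.natAdd d₁ j)) ∈ R}

/-- `P` is not combinatorially equivalent to a nontrivial product of two polytopes. -/
def Indecomposable {d : ℕ} (P : Set (Fin d → ℝ)) : Prop :=
  ¬ ∃ (d₁ d₂ : ℕ) (Q : Set (Fin d₁ → ℝ)) (R : Set (Fin d₂ → ℝ)),
    IsPolytope Q ∧ IsPolytope R ∧ 1 ≤ polyDim Q ∧ 1 ≤ polyDim R ∧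
    CombEquiv P (polyProd Q R)

/-- A building set on the ground set `V`. -/
structure IsBuildingSetOn {m : ℕ} (V : Finset (Fin m)) (B : Finset (Finset (Fin m))) :
    Prop where
  subset_ground : ∀ S ∈ B, S ⊆ V
  nonempty_mem : ∀ S ∈ B, S.Nonempty
  singleton_mem : ∀ i ∈ V, ({i} : Finset (Fin m)) ∈ B
  ground_mem : V ∈ B
  union_mem : ∀ S₁ ∈ B, ∀ S₂ ∈ B, (S₁ ∩ S₂).Nonempty → S₁ ∪ S₂ ∈ B

/-- A connected building set on `[m]`. -/
def IsConnectedBuildingSet (m : ℕ) (B : Finset (Finset (Fin m))) : Prop :=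
  IsBuildingSetOn (Finset.univ : Finset (Fin m)) B

/-- The nestohedron `P_B`: the Minkowski sum of the simplices `Δ_S`, `S ∈ B`. -/
noncomputable def nestohedron (m : ℕ) (B : Finset (Finset (Fin m))) :
    Set (Fin m → ℝ) :=
  ∑ S ∈ B, convexHull ℝ ((fun i => (Pi.single i 1 : Fin m → ℝ)) '' (S : Set (Fin m)))

/-- A diagonal of a convex `N`-gon with vertices labelled by `ZMod N`. -/
def IsDiag (N : ℕ) (e : Finset (ZMod N)) : Prop :=
  ∃ a b : ZMod N, e = {a, b} ∧ b ≠ a ∧ b ≠ a + 1 ∧ b ≠ a - 1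

/-- `c` lies strictly between `a` and `b` on the arc from `a` to `b` (counterclockwise). -/
def StrictBtw (N : ℕ) (a c b : ZMod N) : Prop :=
  0 < (c - a).val ∧ (c - a).val < (b - a).val

/-- Two diagonals cross: their endpoints alternate around the circle. -/
def Crosses (N : ℕ) (e f : Finset (ZMod N)) : Prop :=
  ∃ a b c d : ZMod N, e = {a, b} ∧ f = {c, d} ∧
    StrictBtw N a c b ∧ StrictBtw N b d a

/-- Image of a diagonal under the central symmetry `a ↦ a + n` of the `2n`-gon. -/
def centralSym (n : ℕ) (e : Finset (ZMod (2 * n))) : Finset (ZMod (2 * n)) :=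
  e.image (· + (n : ZMod (2 * n)))

/-- A diameter of the `2n`-gon: a diagonal `{a, a + n}`. -/
def IsDiameter (n : ℕ) (e : Finset (ZMod (2 * n))) : Prop :=
  ∃ a : ZMod (2 * n), e = {a, a + (n : ZMod (2 * n))}

/-- Raw elements of the type `D_n` model: symmetric pairs of diagonals,
red diameters and blue diameters. -/
inductive DElem (n : ℕ) where
  | pair : Finset (Finset (ZMod (2 * n))) → DElem n
  | red  : Finset (ZMod (2 * n)) → DElem n
  | blue : Finset (ZMod (2 * n)) → DElem n

/-- Membership in the set `M_n` of the type `D_n` model. -/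
def memM (n : ℕ) : DElem n → Prop
  | .pair s => ∃ e, IsDiag (2 * n) e ∧ ¬ IsDiameter n e ∧ s = {e, centralSym n e}
  | .red e => IsDiag (2 * n) e ∧ IsDiameter n e
  | .blue e => IsDiag (2 * n) e ∧ IsDiameter n e

/-- Compatibility of elements of the type `D_n` model. -/
def DCompat (n : ℕ) : DElem n → DElem n → Prop
  | .pair s, .pair t => ∀ e ∈ s, ∀ f ∈ t, ¬ Crosses (2 * n) e f
  | .pair s, .red e => ∀ f ∈ s, ¬ Crosses (2 * n) e f
  | .pair s, .blue e => ∀ f ∈ s, ¬ Crosses (2 * n) e f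
  | .red e, .pair s => ∀ f ∈ s, ¬ Crosses (2 * n) e f
  | .blue e, .pair s => ∀ f ∈ s, ¬ Crosses (2 * n) e f
  | .red _, .red _ => True
  | .blue _, .blue _ => True
  | .red e, .blue f => e = f
  | .blue e, .red f => e = f

/-- The set `M_n` of the type `D_n` model, as a type. -/
def MSet (n : ℕ) := {x : DElem n // memM n x}

/-- `P` realizes the type `D_n` model via the bijection `φ`. -/
def RealizesDWith (n : ℕ) {d : ℕ} (P : Set (Fin d → ℝ))
    (φ : MSet n → Set (Fin d → ℝ)) : Prop :=
  IsPolytope P ∧ IsFlagPolytope P ∧ polyDim P = n ∧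
  (∀ x, IsFacetOf (φ x) P) ∧ Function.Injective φ ∧
  (∀ F, IsFacetOf F P → ∃ x, φ x = F) ∧
  ∀ x y : MSet n, x ≠ y → ((φ x ∩ φ y).Nonempty ↔ DCompat n x.1 y.1)

/-- `P` realizes the type `D_n` model. -/
def RealizesD (n : ℕ) {d : ℕ} (P : Set (Fin d → ℝ)) : Prop :=
  ∃ φ, RealizesDWith n P φ

/-- Elements of the type `A_k` model: diagonals of a convex `(k+3)`-gon. -/
def ASet (k : ℕ) := {e : Finset (ZMod (k + 3)) // IsDiag (k + 3) e}

/-- `P` realizes the type `A_k` model via the bijection `φ`. -/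
def RealizesAWith (k : ℕ) {d : ℕ} (P : Set (Fin d → ℝ))
    (φ : ASet k → Set (Fin d → ℝ)) : Prop :=
  IsPolytope P ∧ IsFlagPolytope P ∧ polyDim P = k ∧
  (∀ x, IsFacetOf (φ x) P) ∧ Function.Injective φ ∧
  (∀ F, IsFacetOf F P → ∃ x, φ x = F) ∧
  ∀ x y : ASet k, x ≠ y → ((φ x ∩ φ y).Nonempty ↔ ¬ Crosses (k + 3) x.1 y.1)

/-- `P` realizes the type `A_k` model. -/
def RealizesA (k : ℕ) {d : ℕ} (P : Set (Fin d → ℝ)) : Prop :=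
  ∃ φ, RealizesAWith k P φ

/-- A closed halfspace in `ℝ^d`. -/
def IsClosedHalfspace {d : ℕ} (H : Set (Fin d → ℝ)) : Prop :=
  ∃ (l : (Fin d → ℝ) →ₗ[ℝ] ℝ) (c : ℝ), l ≠ 0 ∧ H = {x | l x ≤ c}

/-- `P'` is obtained from `P` by shaving off a face of codimension 2. -/
def ObtainedByShaving {d : ℕ} (P P' : Set (Fin d → ℝ)) : Prop :=
  ∃ G H : Set (Fin d → ℝ), IsFaceOf G P ∧ polyDim G + 2 = polyDim P ∧
    IsClosedHalfspace H ∧ G ∩ H = ∅ ∧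
    (∀ v, IsVertexOf v P → v ∉ G → v ∈ interior H) ∧ P' = P ∩ H

/-- The restriction `B|_S` of a building set. -/
def restrictBS {m : ℕ} (B : Finset (Finset (Fin m))) (S : Finset (Fin m)) :
    Finset (Finset (Fin m)) :=
  B.filter (· ⊆ S)

/-- The contraction `B / S` of a building set. -/
def contractBS {m : ℕ} (B : Finset (Finset (Fin m))) (S : Finset (Fin m)) :
    Finset (Finset (Fin m)) :=
  (B.filter (fun S'' => ¬ S'' ⊆ S)).image (fun S'' => S'' \ S)

/-- The subset of the nestohedron `P_B` on which `x ↦ ∑_{i ∈ S} x i` is minimized. -/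
def minFace (m : ℕ) (B : Finset (Finset (Fin m))) (S : Finset (Fin m)) :
    Set (Fin m → ℝ) :=
  {x ∈ nestohedron m B | ∀ y ∈ nestohedron m B, ∑ i ∈ S, x i ≤ ∑ i ∈ S, y i}

/-!
A combinatorial equivalence preserves facets, since the facets of a polytope are the maximal
proper faces, and it preserves which facets meet. The facets of `P_B` are the faces `minFace m B S`
for the proper elements `S` of `B`, and two of them meet iff the corresponding elements are
comparable, or disjoint with union outside `B`. So it suffices to show that this relation never has
the pattern of the type `D_n` model.

Fix an element `S` of `B` corresponding to a red diameter. Passing between incompatible elements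
that are both compatible with `S` does not change whether they are contained in `S`, and in the
type `D` model any two elements compatible with a given red diameter are connected through
incompatible pairs. Hence no element compatible with `S` is contained in it, or all are, which
forces `S` to be a singleton or the complement of one. With four diameters complements are
impossible, so all coloured diameters are singletons. If `{p}`, `{r}` are red and `{q}` is blue,
for three distinct diameters, then `{p, q, r} ∈ B` is compatible with `{p}` but not with the blue
copy of the same diameter, although uncoloured elements of the model do not see colours.
-/

section Faces

theorem vectorSpan_le_ker_iff {k V W : Type*} [Ring k] [AddCommGroup V] [Module k V]
    [AddCommGroup W] [Module k W] {s : Set V} {g : V →ₗ[k] W} :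
    vectorSpan k s ≤ LinearMap.ker g ↔ ∀ x ∈ s, ∀ y ∈ s, g x = g y := by
  simp [vectorSpan_def, Submodule.span_le, Set.vsub_subset_iff, sub_eq_zero]

theorem finrank_le_finrank_inf_ker_add_one {k V : Type*} [Field k] [AddCommGroup V] [Module k V]
    [FiniteDimensional k V] (W : Submodule k V) (l : V →ₗ[k] k) :
    Module.finrank k W ≤ Module.finrank k (W ⊓ LinearMap.ker l : Submodule k V) + 1 := by
  have hrange : Module.finrank k (LinearMap.range l) ≤ 1 := by
    simpa using Submodule.finrank_le (LinearMap.range l)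
  have hker := l.finrank_range_add_finrank_ker
  have hsup := Submodule.finrank_sup_add_finrank_inf_eq W (LinearMap.ker l)
  have hle := Submodule.finrank_le (W ⊔ LinearMap.ker l)
  omega

theorem forall_mem_convexHull_le {E : Type*} [AddCommGroup E] [Module ℝ E] {s : Set E}
    {g : E →ₗ[ℝ] ℝ} {c : ℝ} (h : ∀ v ∈ s, g v ≤ c) : ∀ x ∈ convexHull ℝ s, g x ≤ c :=
  convexHull_min h (convex_halfSpace_le g.isLinear c)

variable {d : ℕ} {P F G : Set (Fin d → ℝ)}

theorem polyDim_eq_finrank_vectorSpan (P : Set (Fin d → ℝ)) :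
    polyDim P = Module.finrank ℝ (vectorSpan ℝ P) := by
  rw [polyDim, direction_affineSpan]

theorem isFaceOf_iff_exists_supporting : IsFaceOf F P ↔ F.Nonempty ∧
    ∃ (l : (Fin d → ℝ) →ₗ[ℝ] ℝ) (c : ℝ), (∀ x ∈ P, l x ≤ c) ∧ F = {x ∈ P | l x = c} := by
  refine and_congr_right fun hF => ⟨fun h => ?_, ?_⟩
  · obtain ⟨f, hf⟩ := id hF
    obtain ⟨l, rfl⟩ := h hF
    exact ⟨l, l f, hf.2, Set.ext fun x => and_congr_right fun hx =>
      ⟨fun h => (hf.2 x hx).antisymm (h f hf.1), fun h y hy => (hf.2 y hy).trans h.ge⟩⟩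
  · rintro ⟨l, c, hle, rfl⟩ ⟨f, hf, hfc⟩
    exact ⟨l.toContinuousLinearMap, Set.ext fun x => and_congr_right fun hx =>
      ⟨fun h y hy => (hle y hy).trans h.ge, fun h => (hle x hx).antisymm (hfc.ge.trans (h f hf))⟩⟩

theorem IsFaceOf.mem_of_vsub_mem_vectorSpan (hF : IsFaceOf F P) {f x : Fin d → ℝ} (hf : f ∈ F)
    (hx : x ∈ P) (h : x -ᵥ f ∈ vectorSpan ℝ F) : x ∈ F := by
  obtain ⟨-, l, c, -, rfl⟩ := isFaceOf_iff_exists_supporting.1 hF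
  have hker := vectorSpan_le_ker_iff.2 (fun y hy z hz => hy.2.trans hz.2.symm) h
  rw [vsub_eq_sub, LinearMap.mem_ker, map_sub, sub_eq_zero] at hker
  exact ⟨hx, hker.trans hf.2⟩

theorem IsFaceOf.polyDim_lt (hF : IsFaceOf F P) (hFG : F ⊂ G) (hGP : G ⊆ P) :
    polyDim F < polyDim G := by
  obtain ⟨f, hf⟩ := hF.1
  obtain ⟨x, hxG, hxF⟩ := Set.exists_of_ssubset hFG
  rw [polyDim_eq_finrank_vectorSpan, polyDim_eq_finrank_vectorSpan]
  refine Submodule.finrank_lt_finrank_of_lt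
    (lt_of_le_not_ge (vectorSpan_mono ℝ hFG.subset) fun hle => hxF ?_)
  exact hF.mem_of_vsub_mem_vectorSpan hf (hGP hxG)
    (hle (vsub_mem_vectorSpan ℝ hxG (hFG.subset hf)))

/-- The poset of faces of `P`, ordered by inclusion. It has no bottom element, since faces are
nonempty by convention. -/
abbrev Face (P : Set (Fin d → ℝ)) := {F : Set (Fin d → ℝ) // IsFaceOf F P}

instance [Nonempty P] : OrderTop (Face P) where
  top := ⟨P, Set.nonempty_coe_sort.1 ‹_›, IsExposed.refl P⟩
  le_top F := F.2.2.subset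

theorem Face.eq_top_iff [Nonempty P] {F : Face P} : F = ⊤ ↔ F.1 = P := Subtype.ext_iff

theorem Face.nonempty (F : Face P) : Nonempty P := (F.2.1.mono F.2.2.subset).to_subtype

theorem Face.inter_nonempty_iff_bddBelow (F G : Face P) :
    (F.1 ∩ G.1).Nonempty ↔ BddBelow {F, G} := by
  constructor
  · intro h
    refine ⟨⟨F.1 ∩ G.1, h, F.2.2.inter G.2.2⟩, ?_⟩
    rintro H (rfl | rfl)
    exacts [Set.inter_subset_left, Set.inter_subset_right]
  · rintro ⟨H, hH⟩
    exact H.2.1.mono (Set.subset_inter (hH (.inl rfl)) (hH (.inr rfl)))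

theorem IsFacetOf.isCoatom [Nonempty P] {F : Face P} (hF : IsFacetOf F.1 P) : IsCoatom F := by
  refine isCoatom_iff_ge_of_le.2 ⟨fun h => ?_, fun G hG hFG => ?_⟩
  · have hdim := hF.2
    rw [Face.eq_top_iff.1 h] at hdim
    omega
  · by_contra hGF
    have hlt := F.2.polyDim_lt ⟨hFG, hGF⟩ G.2.2.subset
    have hlt' := G.2.polyDim_lt (G.2.2.subset.ssubset_of_ne (mt Face.eq_top_iff.2 hG)) subset_rfl
    have hdim := hF.2
    omega

/-- Tilting a supporting hyperplane `l = c` of a polytope towards `g` until it hits a vertex `w`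
above the level `b` of `g`. -/
theorem IsPolytope.exists_tilted_supporting (hP : IsPolytope P) {l g : (Fin d → ℝ) →ₗ[ℝ] ℝ}
    {b c : ℝ} (hl : ∀ x ∈ P, l x ≤ c) (hlt : ∀ x ∈ P, b < g x → l x < c)
    (hg : ∃ x ∈ P, b < g x) :
    ∃ t > 0, (∀ x ∈ P, (l + t • g) x ≤ c + t * b) ∧
      ∃ w ∈ P, b < g w ∧ (l + t • g) w = c + t * b := by
  classical
  obtain ⟨V, rfl⟩ := hP
  have hVP : ∀ v ∈ V, v ∈ convexHull ℝ (V : Set (Fin d → ℝ)) := fun v hv =>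
    subset_convexHull ℝ _ hv
  have hV : {v ∈ V | b < g v}.Nonempty := by
    by_contra! h
    obtain ⟨x, hx, hbx⟩ := hg
    refine hbx.not_ge (forall_mem_convexHull_le (fun v hv => not_lt.1 fun hbv => ?_) x hx)
    exact Finset.eq_empty_iff_forall_notMem.1 h v (Finset.mem_filter.2 ⟨hv, hbv⟩)
  obtain ⟨w, hw, hmin⟩ := Finset.exists_min_image _ (fun v => (c - l v) / (g v - b)) hV
  obtain ⟨hwV, hbw⟩ := Finset.mem_filter.1 hw
  have hlw := hlt w (hVP w hwV) hbw
  refine ⟨(c - l w) / (g w - b), div_pos (by linarith) (by linarith),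
    forall_mem_convexHull_le fun v hv => ?_, w, hVP w hwV, hbw, ?_⟩
  · rw [LinearMap.add_apply, LinearMap.smul_apply, smul_eq_mul]
    have hlv := hl v (hVP v hv)
    by_cases hbv : b < g v
    · have := hmin v (Finset.mem_filter.2 ⟨hv, hbv⟩)
      rw [le_div_iff₀ (by linarith)] at this
      linarith
    · have ht : 0 ≤ (c - l w) / (g w - b) := div_nonneg (by linarith) (by linarith)
      linarith [mul_nonneg ht (sub_nonneg.2 (not_lt.1 hbv))]
  · have : (c - l w) / (g w - b) * (g w - b) = c - l w := div_mul_cancel₀ _ (by linarith)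
    rw [LinearMap.add_apply, LinearMap.smul_apply, smul_eq_mul]
    linarith

theorem exists_functional_of_notMem_vectorSpan {f u : Fin d → ℝ} (hf : f ∈ F)
    (huP : u ∈ vectorSpan ℝ P) (huF : u ∉ vectorSpan ℝ F) :
    ∃ g : (Fin d → ℝ) →ₗ[ℝ] ℝ, g u ≠ 0 ∧ (∀ x ∈ F, g x = g f) ∧ ∃ x ∈ P, g f < g x := by
  obtain ⟨g, hgu, hgF⟩ := Submodule.exists_le_ker_of_notMem huF
  have hgF' : ∀ x ∈ F, g x = g f := fun x hx => vectorSpan_le_ker_iff.1 hgF x hx f hf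
  obtain ⟨x, hx, hne⟩ : ∃ x ∈ P, g x ≠ g f := by
    by_contra! hconst
    exact hgu (vectorSpan_le_ker_iff.2
      (fun x hx y hy => (hconst x hx).trans (hconst y hy).symm) huP)
  rcases lt_or_gt_of_ne hne with hlt | hlt
  · exact ⟨-g, by simpa using hgu, fun y hy => by simp [hgF' y hy], x, hx, by simpa using hlt⟩
  · exact ⟨g, hgu, hgF', x, hx, hlt⟩

theorem IsPolytope.mem_vectorSpan_of_isCoatom [Nonempty P] (hP : IsPolytope P) {F : Face P}
    (hF : IsCoatom F) {l : (Fin d → ℝ) →ₗ[ℝ] ℝ} {c : ℝ} (hl : ∀ x ∈ P, l x ≤ c)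
    (hFl : F.1 = {x ∈ P | l x = c}) {u : Fin d → ℝ} (hu : u ∈ vectorSpan ℝ P) (hlu : l u = 0) :
    u ∈ vectorSpan ℝ F.1 := by
  obtain ⟨f, hf⟩ := F.2.1
  have hFP := F.2.2.subset
  have hlF : ∀ x ∈ F.1, l x = c := fun x hx => (hFl ▸ hx).2
  by_contra huF
  obtain ⟨g, hgu, hgF, hgP⟩ := exists_functional_of_notMem_vectorSpan hf hu huF
  have hlt : ∀ x ∈ P, g f < g x → l x < c := fun x hx hgx =>
    (hl x hx).lt_of_ne fun h => hgx.ne' (hgF x (hFl ▸ ⟨hx, h⟩))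
  obtain ⟨t, ht, hle, w, hwP, hgw, hw⟩ := hP.exists_tilted_supporting hl hlt hgP
  let G : Face P := ⟨{x ∈ P | (l + t • g) x = c + t * g f},
    isFaceOf_iff_exists_supporting.2 ⟨⟨w, hwP, hw⟩, _, _, hle, rfl⟩⟩
  have hFG : F ≤ G := fun x hx => ⟨hFP hx, by simp [hlF x hx, hgF x hx]⟩
  have hG : G ≠ ⊤ := fun h => by
    have hconst : ∀ x ∈ P, (l + t • g) x = c + t * g f := fun x hx =>
      ((Face.eq_top_iff.1 h).ge hx).2
    have : (l + t • g) u = 0 := vectorSpan_le_ker_iff.2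
      (fun x hx y hy => (hconst x hx).trans (hconst y hy).symm) hu
    simp [hlu, ht.ne', hgu] at this
  exact hgw.ne' (hgF w ((isCoatom_iff_ge_of_le.1 hF).2 G hG hFG ⟨hwP, hw⟩))

theorem IsPolytope.isFacetOf_iff_isCoatom [Nonempty P] (hP : IsPolytope P) {F : Face P} :
    IsFacetOf F.1 P ↔ IsCoatom F := by
  refine ⟨IsFacetOf.isCoatom, fun hF => ⟨F.2, ?_⟩⟩
  obtain ⟨-, l, c, hl, hFl⟩ := isFaceOf_iff_exists_supporting.1 F.2
  have hle : vectorSpan ℝ P ⊓ LinearMap.ker l ≤ vectorSpan ℝ F.1 := fun u hu =>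
    hP.mem_vectorSpan_of_isCoatom hF hl hFl hu.1 hu.2
  have hlt := F.2.polyDim_lt (F.2.2.subset.ssubset_of_ne (mt Face.eq_top_iff.2 hF.1)) subset_rfl
  have hdrop := finrank_le_finrank_inf_ker_add_one (vectorSpan ℝ P) l
  have hmono := Submodule.finrank_mono hle
  rw [polyDim_eq_finrank_vectorSpan, polyDim_eq_finrank_vectorSpan] at *
  omega

/-- The facets of `P`, as a type. -/
abbrev Facet (P : Set (Fin d → ℝ)) := {F : Set (Fin d → ℝ) // IsFacetOf F P}

variable {d' : ℕ} {Q : Set (Fin d' → ℝ)}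

theorem Face.map_inter_nonempty (Ψ : Face P ≃o Face Q) (F G : Face P) :
    ((Ψ F).1 ∩ (Ψ G).1).Nonempty ↔ (F.1 ∩ G.1).Nonempty := by
  rw [inter_nonempty_iff_bddBelow, inter_nonempty_iff_bddBelow, ← Set.image_pair,
    OrderIso.bddBelow_image]

theorem Face.isFacetOf_map (hP : IsPolytope P) (hQ : IsPolytope Q) (Ψ : Face P ≃o Face Q)
    (F : Face P) : IsFacetOf (Ψ F).1 Q ↔ IsFacetOf F.1 P := by
  have := F.nonempty
  have := (Ψ F).nonempty
  rw [hP.isFacetOf_iff_isCoatom, hQ.isFacetOf_iff_isCoatom, OrderIso.isCoatom_iff]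

theorem CombEquiv.exists_facet_equiv (h : CombEquiv P Q) (hP : IsPolytope P)
    (hQ : IsPolytope Q) : ∃ e : Facet P ≃ Facet Q,
      ∀ F G, ((e F).1 ∩ (e G).1).Nonempty ↔ (F.1 ∩ G.1).Nonempty := by
  obtain ⟨Ψ⟩ := h
  let ι {k : ℕ} (R : Set (Fin k → ℝ)) : {F : Face R // IsFacetOf F.1 R} ≃ Facet R :=
    Equiv.subtypeSubtypeEquivSubtype (q := (IsFacetOf · R)) And.left
  refine ⟨(ι P).symm.trans ((Ψ.toEquiv.subtypeEquiv fun F => ?_).trans (ι Q)), fun F G =>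
    Face.map_inter_nonempty Ψ _ _⟩
  exact (Face.isFacetOf_map hP hQ Ψ F).symm

end Faces

section NestedSets

variable {α : Type*} [DecidableEq α] {𝓑 : Finset (Finset α)} {X Y : Finset α}

/-- Compatibility of two elements of a building set `𝓑`: they may belong to a common nested set,
that is, they are comparable, or disjoint with union outside `𝓑`. -/
def NestedCompat (𝓑 : Finset (Finset α)) (X Y : Finset α) : Prop :=
  X ⊆ Y ∨ Y ⊆ X ∨ Disjoint X Y ∧ X ∪ Y ∉ 𝓑

theorem NestedCompat.refl (𝓑 : Finset (Finset α)) (X : Finset α) : NestedCompat 𝓑 X X :=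
  .inl subset_rfl

theorem NestedCompat.symm (h : NestedCompat 𝓑 X Y) : NestedCompat 𝓑 Y X := by
  rwa [NestedCompat, or_left_comm, disjoint_comm, Finset.union_comm]

theorem NestedCompat.comm : NestedCompat 𝓑 X Y ↔ NestedCompat 𝓑 Y X := ⟨.symm, .symm⟩

theorem nestedCompat_singleton_iff {i : α} (hX : X.Nontrivial) :
    NestedCompat 𝓑 X {i} ↔ i ∈ X ∨ X ∪ {i} ∉ 𝓑 := by
  by_cases hi : i ∈ X <;> simp [NestedCompat, hX.ne_singleton, hX.nonempty.ne_empty, hi]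

variable {m : ℕ} {V : Finset (Fin m)} {B : Finset (Finset (Fin m))} {S T U W : Finset (Fin m)}

theorem IsBuildingSetOn.union_mem_of_not_disjoint (hB : IsBuildingSetOn V B) (hS : S ∈ B)
    (hT : T ∈ B) (h : ¬ Disjoint S T) : S ∪ T ∈ B :=
  hB.union_mem S hS T hT (Finset.not_disjoint_iff_nonempty_inter.1 h)

theorem IsBuildingSetOn.nestedCompat_of_subset (hB : IsBuildingSetOn V B) (hS : S ∈ B)
    (hT : T ∈ B) (hTS : T ⊆ S) (h : NestedCompat B U S) (hUS : ¬ U ⊆ S) :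
    NestedCompat B T U := by
  rcases h with h | hSU | ⟨hdisj, hUSB⟩
  · exact absurd h hUS
  · exact .inl (hTS.trans hSU)
  · refine .inr (.inr ⟨(hdisj.mono_right hTS).symm, fun hTU => hUSB ?_⟩)
    obtain ⟨i, hi⟩ := hB.nonempty_mem T hT
    have hmem := hB.union_mem_of_not_disjoint hTU hS
      (Finset.not_disjoint_iff.2 ⟨i, Finset.mem_union_left U hi, hTS hi⟩)
    rwa [Finset.union_right_comm, Finset.union_eq_right.2 hTS, Finset.union_comm] at hmem

theorem IsBuildingSetOn.subset_iff_subset (hB : IsBuildingSetOn V B) (hS : S ∈ B) (hT : T ∈ B)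
    (hU : U ∈ B) (hTS : NestedCompat B T S) (hUS : NestedCompat B U S)
    (hTU : ¬ NestedCompat B T U) : T ⊆ S ↔ U ⊆ S := by
  constructor <;> intro h <;> by_contra h'
  · exact hTU (hB.nestedCompat_of_subset hS hT h hUS h')
  · exact hTU (hB.nestedCompat_of_subset hS hU h hTS h').symm

theorem IsBuildingSetOn.nestedCompat_iff_forall_exists_mem (hB : IsBuildingSetOn V B)
    (hS : S ∈ B) (hT : T ∈ B) :
    NestedCompat B S T ↔ ∀ U ∈ B, ∃ i ∈ U, (¬ U ⊆ S → i ∉ S) ∧ (¬ U ⊆ T → i ∉ T) := by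
  constructor
  · intro h U hU
    by_contra! hcon
    obtain ⟨u, hu⟩ := hB.nonempty_mem U hU
    have hUS : ¬ U ⊆ S := fun hUS =>
      (hcon u hu (absurd hUS)).1 fun i hi => (hcon i hi (absurd hUS)).2
    have hcov : U ⊆ S ∪ T := fun i hi => by
      by_cases hiS : i ∈ S
      · exact Finset.mem_union_left T hiS
      · exact Finset.mem_union_right S (hcon i hi fun _ => hiS).2
    obtain ⟨k, hkU, hkS⟩ := Finset.not_subset.1 hUS
    obtain ⟨hUT, hkT⟩ := hcon k hkU fun _ => hkS
    obtain ⟨l, hlU, hlT⟩ := Finset.not_subset.1 hUT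
    rcases h with hST | hTS | ⟨-, hSTB⟩
    · exact hUT (Finset.union_eq_right.2 hST ▸ hcov)
    · exact hkS (hTS hkT)
    · have hlS := (Finset.mem_union.1 (hcov hlU)).resolve_right hlT
      have hUSB := hB.union_mem_of_not_disjoint hU hS (Finset.not_disjoint_iff.2 ⟨l, hlU, hlS⟩)
      have hmem := hB.union_mem_of_not_disjoint hUSB hT
        (Finset.not_disjoint_iff.2 ⟨k, Finset.mem_union_left S hkU, hkT⟩)
      rw [Finset.union_assoc, Finset.union_eq_right.2 hcov] at hmem
      exact hSTB hmem
  · intro h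
    by_contra hcompat
    obtain ⟨hST, hTS, hunion⟩ : ¬ S ⊆ T ∧ ¬ T ⊆ S ∧ (Disjoint S T → S ∪ T ∈ B) := by
      simpa [NestedCompat] using hcompat
    have hmem : S ∪ T ∈ B := by
      by_cases hdisj : Disjoint S T
      exacts [hunion hdisj, hB.union_mem_of_not_disjoint hS hT hdisj]
    obtain ⟨i, hi, hiS, hiT⟩ := h _ hmem
    have hiS := hiS fun h => hTS (Finset.union_subset_right h)
    have hiT := hiT fun h => hST (Finset.union_subset_left h)
    exact (Finset.mem_union.1 hi).elim hiS hiT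

theorem IsBuildingSetOn.exists_maximal_disjoint (hB : IsBuildingSetOn V B) {j : Fin m}
    (hjV : j ∈ V) (hjW : j ∉ W) : ∃ T ∈ B, Disjoint T W ∧
      ∀ U ∈ B, ¬ U ⊆ T → ¬ Disjoint U T → ¬ Disjoint U W := by
  obtain ⟨T, hT⟩ := Finset.exists_maximal (s := {T ∈ B | Disjoint T W})
    ⟨{j}, by simp [hB.singleton_mem j hjV, hjW]⟩
  obtain ⟨hTB, hTW⟩ := Finset.mem_filter.1 hT.1
  refine ⟨T, hTB, hTW, fun U hU hUT hdisj hUW => hUT ?_⟩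
  have hunion : U ∪ T ∈ {T ∈ B | Disjoint T W} := Finset.mem_filter.2
    ⟨hB.union_mem_of_not_disjoint hU hTB hdisj, Finset.disjoint_union_left.2 ⟨hUW, hTW⟩⟩
  exact Finset.union_subset_left (hT.2 hunion Finset.subset_union_right)

theorem IsBuildingSetOn.exists_ne_subset (hB : IsBuildingSetOn V B) (hS : S ∈ B)
    (hsing : ∀ i, S ≠ {i}) : ∃ T ∈ B.erase V, T ≠ S ∧ T ⊆ S := by
  obtain ⟨i, hi⟩ := hB.nonempty_mem S hS
  have hiS : {i} ⊆ S := Finset.singleton_subset_iff.2 hi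
  refine ⟨{i}, Finset.mem_erase.2 ⟨fun h => hsing i ?_, hB.singleton_mem i
    (hB.subset_ground S hS hi)⟩, (hsing i).symm, hiS⟩
  exact (h ▸ hB.subset_ground S hS).antisymm hiS

theorem IsBuildingSetOn.exists_compat_not_subset (hB : IsBuildingSetOn V B)
    (hS : S ∈ B.erase V) (hcosing : ∀ i, S ≠ V.erase i) :
    ∃ T ∈ B.erase V, NestedCompat B T S ∧ ¬ T ⊆ S := by
  obtain ⟨hSV, hSB⟩ := Finset.mem_erase.1 hS
  have hsub := hB.subset_ground S hSB
  obtain ⟨j, hjV, hjS⟩ := Finset.exists_of_ssubset (hsub.ssubset_of_ne hSV)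
  by_cases hmem : insert j S ∈ B
  · refine ⟨insert j S, Finset.mem_erase.2 ⟨fun h => hcosing j ?_, hmem⟩,
      .inr (.inl (Finset.subset_insert j S)), fun h => hjS (h (Finset.mem_insert_self j S))⟩
    rw [← h, Finset.erase_insert hjS]
  · refine ⟨{j}, Finset.mem_erase.2 ⟨fun h => ?_, hB.singleton_mem j hjV⟩,
      .inr (.inr ⟨Finset.disjoint_singleton_left.2 hjS, hmem⟩),
      fun h => hjS (Finset.singleton_subset_iff.1 h)⟩
    obtain ⟨i, hi⟩ := hB.nonempty_mem S hSB
    exact hjS (Finset.mem_singleton.1 (h ▸ hsub hi) ▸ hi)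

theorem IsBuildingSetOn.eq_of_nestedCompat_erase (hB : IsBuildingSetOn V B) {i j : Fin m}
    (hi : V.erase i ≠ V) (hj : V.erase j ≠ V) (h : NestedCompat B (V.erase i) (V.erase j)) :
    i = j := by
  by_contra hij
  have hiV : i ∈ V := by_contra fun h => hi (Finset.erase_eq_of_notMem h)
  have hjV : j ∈ V := by_contra fun h => hj (Finset.erase_eq_of_notMem h)
  rcases h with h | h | ⟨-, h⟩
  · exact Finset.notMem_erase j V (h (Finset.mem_erase.2 ⟨Ne.symm hij, hjV⟩))
  · exact Finset.notMem_erase i V (h (Finset.mem_erase.2 ⟨hij, hiV⟩))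
  · rw [Finset.erase_union_of_mem (Finset.mem_erase.2 ⟨hij, hiV⟩),
      Finset.union_eq_left.2 (Finset.erase_subset j V)] at h
    exact h hB.ground_mem

end NestedSets

section DiameterLabelling

variable {m : ℕ} {V : Finset (Fin m)} {B : Finset (Finset (Fin m))} {T : Finset (Fin m)}
  {ι : Type*} {red blue : ι → Finset (Fin m)}

/-- The compatibility pattern of the two families of coloured diameters of the type `D` model, for
families `red` and `blue` of proper elements of a building set `B` on `V`. All other proper
elements of `B` correspond to pairs of diagonals, which do not see the colour of a diameter and
are incompatible with some diameter. -/
structure IsDiameterLabelling (V : Finset (Fin m)) (B : Finset (Finset (Fin m)))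
    (red blue : ι → Finset (Fin m)) : Prop where
  red_mem : ∀ a, red a ∈ B.erase V
  blue_mem : ∀ a, blue a ∈ B.erase V
  red_compat_red : ∀ a c, NestedCompat B (red a) (red c)
  blue_compat_blue : ∀ a c, NestedCompat B (blue a) (blue c)
  red_compat_blue_iff : ∀ a c, NestedCompat B (red a) (blue c) ↔ a = c
  trichotomy : ∀ S ∈ B.erase V, (∃ a, S = red a) ∨ (∃ a, S = blue a) ∨
    (∀ a, NestedCompat B S (red a) ↔ NestedCompat B S (blue a)) ∧ ∃ a, ¬ NestedCompat B S (red a)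

namespace IsDiameterLabelling

theorem symm (h : IsDiameterLabelling V B red blue) : IsDiameterLabelling V B blue red where
  red_mem := h.blue_mem
  blue_mem := h.red_mem
  red_compat_red := h.blue_compat_blue
  blue_compat_blue := h.red_compat_red
  red_compat_blue_iff a c := by rw [NestedCompat.comm, h.red_compat_blue_iff, eq_comm]
  trichotomy S hS := by
    rcases h.trichotomy S hS with hred | hblue | ⟨hiff, a, ha⟩
    · exact .inr (.inl hred)
    · exact .inl hblue
    · exact .inr (.inr ⟨fun c => (hiff c).symm, a, fun hc => ha ((hiff a).2 hc)⟩)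

theorem red_injective (h : IsDiameterLabelling V B red blue) : Function.Injective red :=
  fun a c hac => (h.red_compat_blue_iff a c).1 (hac ▸ (h.red_compat_blue_iff c c).2 rfl)

theorem red_ne_blue [Nontrivial ι] (h : IsDiameterLabelling V B red blue) (a c : ι) :
    red a ≠ blue c := by
  intro hac
  obtain rfl := (h.red_compat_blue_iff a c).1 (hac ▸ .refl B _)
  obtain ⟨c, hc⟩ := exists_ne a
  exact hc ((h.red_compat_blue_iff c a).1 (hac ▸ h.red_compat_red c a))

/-- The elements compatible with `red a` are connected through incompatible pairs, so they all lie
on the same side of it. -/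
theorem subset_red_iff (hB : IsBuildingSetOn V B) (h : IsDiameterLabelling V B red blue) {a : ι}
    (hT : T ∈ B.erase V) (hne : T ≠ red a) (hcompat : NestedCompat B T (red a)) :
    T ⊆ red a ↔ blue a ⊆ red a := by
  have mem {S} (hS : S ∈ B.erase V) : S ∈ B := Finset.mem_of_mem_erase hS
  have hblue : NestedCompat B (blue a) (red a) := ((h.red_compat_blue_iff a a).2 rfl).symm
  have hred {c : ι} (hc : c ≠ a) : red c ⊆ red a ↔ blue a ⊆ red a :=
    hB.subset_iff_subset (mem (h.red_mem a)) (mem (h.red_mem c)) (mem (h.blue_mem a))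
      (h.red_compat_red c a) hblue (mt (h.red_compat_blue_iff c a).1 hc)
  rcases h.trichotomy T hT with ⟨c, rfl⟩ | ⟨c, rfl⟩ | ⟨-, c, hc⟩
  · exact hred (ne_of_apply_ne red hne)
  · rw [(h.red_compat_blue_iff a c).1 hcompat.symm]
  · have hca : c ≠ a := by rintro rfl; exact hc hcompat
    rw [← hred hca]
    exact hB.subset_iff_subset (mem (h.red_mem a)) (mem hT) (mem (h.red_mem c)) hcompat
      (h.red_compat_red c a) hc

theorem red_eq_singleton_or_eq_erase (hB : IsBuildingSetOn V B)
    (h : IsDiameterLabelling V B red blue) (a : ι) :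
    (∃ i, red a = {i}) ∨ ∃ i, red a = V.erase i := by
  by_contra! hcon
  obtain ⟨T, hT, hne, hsub⟩ :=
    hB.exists_ne_subset (Finset.mem_of_mem_erase (h.red_mem a)) hcon.1
  obtain ⟨U, hU, hcompat, hnsub⟩ := hB.exists_compat_not_subset (h.red_mem a) hcon.2
  have hUne : U ≠ red a := fun hU => hnsub hU.subset
  exact hnsub ((h.subset_red_iff hB hU hUne hcompat).2
    ((h.subset_red_iff hB hT hne (.inl hsub)).1 hsub))

theorem red_eq_singleton [Fintype ι] (hι : 4 ≤ Fintype.card ι) (hB : IsBuildingSetOn V B)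
    (h : IsDiameterLabelling V B red blue) (a : ι) : ∃ i, red a = {i} := by
  classical
  rcases h.red_eq_singleton_or_eq_erase hB a with hsing | ⟨i, hi⟩
  · exact hsing
  exfalso
  have hblue (c : ι) (hc : c ≠ a) : blue c = {i} ∨ ∃ j, blue c = V.erase j := by
    refine (h.symm.red_eq_singleton_or_eq_erase hB c).imp_left fun ⟨j, hj⟩ => ?_
    by_contra hji
    have hjV : j ∈ V :=
      hB.subset_ground _ (Finset.mem_of_mem_erase (h.blue_mem c)) (by simp [hj])
    refine hc ((h.red_compat_blue_iff a c).1 (.inr (.inl ?_))).symm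
    rw [hi, hj, Finset.singleton_subset_iff, Finset.mem_erase]
    exact ⟨fun hij => hji (hij ▸ hj), hjV⟩
  have hcard : Fintype.card Prop < Fintype.card {c // c ≠ a} := by
    rw [Fintype.card_prop, Fintype.card_subtype_compl, Fintype.card_subtype_eq]
    omega
  obtain ⟨⟨c, hc⟩, ⟨c', hc'⟩, hne, heq⟩ :=
    Fintype.exists_ne_map_eq_of_card_lt (fun c : {c // c ≠ a} => blue c = {i}) hcard
  refine hne (Subtype.ext (h.symm.red_injective ?_))
  by_cases hci : blue c = {i}
  · exact hci.trans (heq.mp hci).symm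
  · obtain ⟨j, hj⟩ := (hblue c hc).resolve_left hci
    obtain ⟨k, hk⟩ := (hblue c' hc').resolve_left (heq ▸ hci)
    have hjk := hB.eq_of_nestedCompat_erase (hj ▸ (Finset.mem_erase.1 (h.blue_mem c)).1)
      (hk ▸ (Finset.mem_erase.1 (h.blue_mem c')).1) (hj ▸ hk ▸ h.blue_compat_blue c c')
    rw [hj, hk, hjk]

theorem ne_and_union_mem [Nontrivial ι] (h : IsDiameterLabelling V B red blue) {a c : ι}
    (hac : a ≠ c) {i j : Fin m} (hi : red a = {i}) (hj : blue c = {j}) : i ≠ j ∧ {i} ∪ {j} ∈ B := by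
  have hij : i ≠ j := by
    rintro rfl
    exact h.red_ne_blue a c (hi.trans hj.symm)
  refine ⟨hij, by_contra fun hmem => hac ?_⟩
  rw [← h.red_compat_blue_iff, hi, hj]
  exact .inr (.inr ⟨Finset.disjoint_singleton.2 hij, hmem⟩)

theorem compat_red_iff_compat_blue [Fintype ι] (hι : 4 ≤ Fintype.card ι)
    (hB : IsBuildingSetOn V B) (h : IsDiameterLabelling V B red blue) (hT : T ∈ B.erase V)
    (hnontriv : T.Nontrivial) (a : ι) : NestedCompat B T (red a) ↔ NestedCompat B T (blue a) := by
  rcases h.trichotomy T hT with ⟨c, rfl⟩ | ⟨c, rfl⟩ | ⟨hiff, -⟩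
  · obtain ⟨i, hi⟩ := h.red_eq_singleton hι hB c
    exact absurd hi hnontriv.ne_singleton
  · obtain ⟨i, hi⟩ := h.symm.red_eq_singleton hι hB c
    exact absurd hi hnontriv.ne_singleton
  · exact hiff a

end IsDiameterLabelling

theorem IsBuildingSetOn.not_isDiameterLabelling [Fintype ι] (hι : 4 ≤ Fintype.card ι)
    (hB : IsBuildingSetOn V B) : ¬ IsDiameterLabelling V B red blue := by
  intro h
  have : Nontrivial ι := Fintype.one_lt_card_iff_nontrivial.1 (by omega)
  obtain ⟨a, b, c, hab, hac, hbc⟩ := Fintype.two_lt_card_iff.1 (by omega : 2 < Fintype.card ι)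
  obtain ⟨p, hp⟩ := h.red_eq_singleton hι hB a
  obtain ⟨q, hq⟩ := h.symm.red_eq_singleton hι hB b
  obtain ⟨r, hr⟩ := h.red_eq_singleton hι hB c
  obtain ⟨s, hs⟩ := h.symm.red_eq_singleton hι hB a
  obtain ⟨hpq, hpqB⟩ := h.ne_and_union_mem hab hp hq
  obtain ⟨-, hrqB⟩ := h.ne_and_union_mem hbc.symm hr hq
  obtain ⟨hrs, hrsB⟩ := h.ne_and_union_mem hac.symm hr hs
  have hps : s ≠ p := by
    rintro rfl
    exact h.red_ne_blue a a (hp.trans hs.symm)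
  have hqs : s ≠ q := by
    rintro rfl
    exact hab (h.symm.red_injective (hs.trans hq.symm))
  -- `{p, q, r}` is compatible with `red a = {p}` but not with `blue a = {s}`
  obtain ⟨T, hTdef⟩ : ∃ T : Finset (Fin m), T = {p} ∪ {q} ∪ ({r} ∪ {q}) := ⟨_, rfl⟩
  have hrT : r ∈ T := by simp [hTdef]
  have hsT : s ∉ T := by simp [hTdef, hps, hqs, hrs.symm]
  have hTB : T ∈ B := hTdef ▸ hB.union_mem _ hpqB _ hrqB ⟨q, by simp⟩
  have hTsB : T ∪ {s} ∈ B := by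
    have := hB.union_mem _ hTB _ hrsB ⟨r, by simp [hrT]⟩
    rwa [← Finset.union_assoc, Finset.union_eq_left.2 (Finset.singleton_subset_iff.2 hrT)] at this
  have hTV : T ≠ V := by
    rintro rfl
    exact hsT (hB.subset_ground _ hrsB (by simp))
  have hnontriv : T.Nontrivial := ⟨p, by simp [hTdef], q, by simp [hTdef], hpq⟩
  have hiff := h.compat_red_iff_compat_blue hι hB (Finset.mem_erase.2 ⟨hTV, hTB⟩) hnontriv a
  rw [hp, hs, nestedCompat_singleton_iff hnontriv, nestedCompat_singleton_iff hnontriv] at hiff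
  exact (hiff.1 (.inl (by simp [hTdef]))).elim hsT (· hTsB)

end DiameterLabelling

section Simplex

theorem isMaxOn_sum_iff {κ E R : Type*} [AddCommMonoid E] [AddCommMonoid R] [PartialOrder R]
    [IsOrderedCancelAddMonoid R] {l : E →+ R} {s : Finset κ} {K : κ → Set E} {y : κ → E}
    (hy : ∀ a ∈ s, y a ∈ K a) :
    IsMaxOn l (∑ a ∈ s, K a) (∑ a ∈ s, y a) ↔ ∀ a ∈ s, IsMaxOn l (K a) (y a) := by
  classical
  simp only [isMaxOn_iff, Set.mem_finsetSum]
  constructor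
  · intro h a ha z hz
    have hmem : ∀ b ∈ s, Function.update y a z b ∈ K b := fun b hb => by
      rcases eq_or_ne b a with rfl | hba
      · simpa using hz
      · simpa [hba] using hy b hb
    have hle := h _ ⟨Function.update y a z, fun {b} hb => hmem b hb, rfl⟩
    rw [Finset.sum_update_of_mem ha, ← Finset.sum_sdiff (Finset.singleton_subset_iff.2 ha),
      Finset.sum_singleton, add_comm z, map_add, map_add] at hle
    exact le_of_add_le_add_left hle
  · rintro h _ ⟨z, hz, rfl⟩
    rw [map_sum, map_sum]
    exact Finset.sum_le_sum fun a ha => h a ha (z a) (hz ha)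

variable {ι : Type*} [DecidableEq ι] {S : Finset ι} {x : ι → ℝ} {i : ι}

/-- The simplex `Δ_S` spanned by the basis vectors indexed by `S`. -/
def simplexOn (S : Finset ι) : Set (ι → ℝ) :=
  convexHull ℝ ((fun i => (Pi.single i 1 : ι → ℝ)) '' (S : Set ι))

theorem single_mem_simplexOn (hi : i ∈ S) : Pi.single i 1 ∈ simplexOn S :=
  subset_convexHull ℝ _ (Set.mem_image_of_mem _ hi)

theorem nonneg_of_mem_simplexOn (hx : x ∈ simplexOn S) (i : ι) : 0 ≤ x i := by
  refine convexHull_min (Set.image_subset_iff.2 fun j _ => ?_)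
    (convex_halfSpace_ge (LinearMap.proj i : (ι → ℝ) →ₗ[ℝ] ℝ).isLinear 0) hx
  exact (Pi.single_nonneg.2 zero_le_one : (0 : ι → ℝ) ≤ Pi.single j 1) i

theorem map_eq_of_mem_simplexOn {f g : (ι → ℝ) →ₗ[ℝ] ℝ} (hx : x ∈ simplexOn S)
    (h : ∀ i ∈ S, f (Pi.single i 1) = g (Pi.single i 1)) : f x = g x :=
  convexHull_min (by rintro _ ⟨i, hi, rfl⟩; exact h i hi)
    (Submodule.convex (LinearMap.eqLocus f g)) hx

theorem eq_zero_of_mem_simplexOn (hx : x ∈ simplexOn S) (hi : i ∉ S) : x i = 0 :=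
  map_eq_of_mem_simplexOn (f := LinearMap.proj i) (g := 0) hx fun j hj => by
    simp [ne_of_mem_of_not_mem hj hi]

theorem sum_eq_one_of_mem_simplexOn (hx : x ∈ simplexOn S) : ∑ i ∈ S, x i = 1 := by
  have hconvex := convex_hyperplane (∑ i ∈ S, LinearMap.proj i : (ι → ℝ) →ₗ[ℝ] ℝ).isLinear 1
  simpa using convexHull_min (Set.image_subset_iff.2 fun j hj => by simp_all) hconvex hx

theorem map_sub_eq_sum_of_mem_simplexOn (hx : x ∈ simplexOn S) (l : (ι → ℝ) →ₗ[ℝ] ℝ) (c : ℝ) :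
    l x - c = ∑ i ∈ S, x i * (l (Pi.single i 1) - c) := by
  have hlx : l x = (∑ i ∈ S, l (Pi.single i 1) • LinearMap.proj i : (ι → ℝ) →ₗ[ℝ] ℝ) x :=
    map_eq_of_mem_simplexOn hx fun i hi => by simp [Pi.single_apply, hi]
  simp_rw [mul_sub, Finset.sum_sub_distrib, ← Finset.sum_mul, sum_eq_one_of_mem_simplexOn hx,
    one_mul]
  simp [hlx, mul_comm]

theorem isMaxOn_simplexOn_iff (hx : x ∈ simplexOn S) {l : (ι → ℝ) →ₗ[ℝ] ℝ} :
    IsMaxOn l (simplexOn S) x ↔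
      ∀ i ∈ S, ∀ k ∈ S, l (Pi.single i 1) < l (Pi.single k 1) → x i = 0 := by
  have hnonneg := nonneg_of_mem_simplexOn hx
  constructor
  · intro h i hi k hk hlt
    obtain ⟨t, ht, hmax⟩ := S.exists_max_image (fun j => l (Pi.single j 1)) ⟨i, hi⟩
    have hterm : ∀ j ∈ S, x j * (l (Pi.single j 1) - l (Pi.single t 1)) ≤ 0 := fun j hj =>
      mul_nonpos_of_nonneg_of_nonpos (hnonneg j) (sub_nonpos.2 (hmax j hj))
    have hsum : ∑ j ∈ S, x j * (l (Pi.single j 1) - l (Pi.single t 1)) = 0 := by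
      refine (Finset.sum_nonpos hterm).antisymm ?_
      rw [← map_sub_eq_sum_of_mem_simplexOn hx, sub_nonneg]
      exact h (single_mem_simplexOn ht)
    have hzero := (Finset.sum_eq_zero_iff_of_nonpos hterm).1 hsum i hi
    exact (mul_eq_zero.1 hzero).resolve_right (sub_neg.2 (hlt.trans_le (hmax k hk))).ne
  · intro h
    refine forall_mem_convexHull_le ?_
    rintro _ ⟨k, hk, rfl⟩
    rw [← sub_nonneg, map_sub_eq_sum_of_mem_simplexOn hx]
    refine Finset.sum_nonneg fun i hi => ?_
    rcases lt_or_ge (l (Pi.single i 1)) (l (Pi.single k 1)) with hlt | hle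
    · rw [h i hi k hk hlt, zero_mul]
    · exact mul_nonneg (hnonneg i) (sub_nonneg.2 hle)

end Simplex

section Nestohedron

variable {m : ℕ} {B : Finset (Finset (Fin m))} {S T : Finset (Fin m)} {x : Fin m → ℝ}

theorem mem_nestohedron : x ∈ nestohedron m B ↔
    ∃ y : Finset (Fin m) → Fin m → ℝ, (∀ U ∈ B, y U ∈ simplexOn U) ∧ ∑ U ∈ B, y U = x := by
  simp [nestohedron, Set.mem_finsetSum, simplexOn]

theorem isMaxOn_nestohedron_iff {y : Finset (Fin m) → Fin m → ℝ}
    (hy : ∀ U ∈ B, y U ∈ simplexOn U) {l : (Fin m → ℝ) →ₗ[ℝ] ℝ} :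
    IsMaxOn l (nestohedron m B) (∑ U ∈ B, y U) ↔ ∀ U ∈ B, ∀ i ∈ U, ∀ k ∈ U,
      l (Pi.single i 1) < l (Pi.single k 1) → y U i = 0 :=
  (isMaxOn_sum_iff (l := l.toAddMonoidHom) hy).trans
    (forall₂_congr fun U hU => isMaxOn_simplexOn_iff (hy U hU))

/-- The functional `x ↦ ∑ i ∈ T, x i`, which is minimized on the face `minFace m B T`. -/
def coordSum (T : Finset (Fin m)) : (Fin m → ℝ) →ₗ[ℝ] ℝ := ∑ i ∈ T, LinearMap.proj i

@[simp]
theorem coordSum_apply (T : Finset (Fin m)) (x : Fin m → ℝ) : coordSum T x = ∑ i ∈ T, x i := by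
  simp [coordSum]

theorem sum_mem_minFace_iff {y : Finset (Fin m) → Fin m → ℝ}
    (hy : ∀ U ∈ B, y U ∈ simplexOn U) :
    ∑ U ∈ B, y U ∈ minFace m B T ↔ ∀ U ∈ B, ¬ U ⊆ T → ∀ i ∈ T, y U i = 0 := by
  have hmax : ∑ U ∈ B, y U ∈ minFace m B T ↔
      IsMaxOn (-coordSum T) (nestohedron m B) (∑ U ∈ B, y U) := by
    simp only [minFace, isMaxOn_iff, LinearMap.neg_apply, coordSum_apply, neg_le_neg_iff,
      Set.mem_ofPred_eq, mem_nestohedron.2 ⟨y, hy, rfl⟩, true_and]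
  rw [hmax, isMaxOn_nestohedron_iff hy]
  refine forall₂_congr fun U hU => ⟨fun h hUT i hiT => ?_, fun h i _ k hk hlt => ?_⟩
  · obtain ⟨k, hkU, hkT⟩ := Finset.not_subset.1 hUT
    by_cases hiU : i ∈ U
    · exact h i hiU k hkU (by simp [Pi.single_apply, hiT, hkT])
    · exact eq_zero_of_mem_simplexOn (hy U hU) hiU
  · have hiT : i ∈ T := by
      by_contra hiT
      by_cases hkT : k ∈ T <;> norm_num [Pi.single_apply, hiT, hkT] at hlt
    have hkT : k ∉ T := fun hkT => by simp [Pi.single_apply, hiT, hkT] at hlt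
    exact h (Finset.not_subset.2 ⟨k, hk, hkT⟩) i hiT

theorem minFace_inter_nonempty_iff_forall_exists_mem : (minFace m B S ∩ minFace m B T).Nonempty ↔
    ∀ U ∈ B, ∃ i ∈ U, (¬ U ⊆ S → i ∉ S) ∧ (¬ U ⊆ T → i ∉ T) := by
  constructor
  · rintro ⟨x, hxS, hxT⟩ U hU
    obtain ⟨y, hy, rfl⟩ := mem_nestohedron.1 hxS.1
    obtain ⟨i, hi, hne⟩ := Finset.exists_ne_zero_of_sum_ne_zero
      ((sum_eq_one_of_mem_simplexOn (hy U hU)).trans_ne one_ne_zero)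
    exact ⟨i, hi, fun h hiS => hne ((sum_mem_minFace_iff hy).1 hxS U hU h i hiS),
      fun h hiT => hne ((sum_mem_minFace_iff hy).1 hxT U hU h i hiT)⟩
  · intro h
    have hvertex : ∀ U ∈ B, ∃ v ∈ simplexOn U,
        (¬ U ⊆ S → ∀ i ∈ S, v i = 0) ∧ (¬ U ⊆ T → ∀ i ∈ T, v i = 0) := fun U hU => by
      obtain ⟨k, hk, hkS, hkT⟩ := h U hU
      exact ⟨Pi.single k 1, single_mem_simplexOn hk,
        fun hUS i hi => Pi.single_eq_of_ne (ne_of_mem_of_not_mem hi (hkS hUS)) 1,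
        fun hUT i hi => Pi.single_eq_of_ne (ne_of_mem_of_not_mem hi (hkT hUT)) 1⟩
    choose! y hy hyS hyT using hvertex
    exact ⟨∑ U ∈ B, y U, (sum_mem_minFace_iff hy).2 hyS, (sum_mem_minFace_iff hy).2 hyT⟩

theorem minFace_inter_nonempty_iff (hB : IsConnectedBuildingSet m B) (hS : S ∈ B) (hT : T ∈ B) :
    (minFace m B S ∩ minFace m B T).Nonempty ↔ NestedCompat B S T := by
  rw [minFace_inter_nonempty_iff_forall_exists_mem, hB.nestedCompat_iff_forall_exists_mem hS hT]

theorem minFace_nonempty (hB : IsConnectedBuildingSet m B) (hS : S ∈ B) :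
    (minFace m B S).Nonempty :=
  ((minFace_inter_nonempty_iff hB hS hS).2 (.refl B S)).left

theorem notMem_of_minFace_subset (hB : IsConnectedBuildingSet m B) (hS : S ∈ B)
    (h : minFace m B S ⊆ minFace m B T) {U : Finset (Fin m)} (hU : U ∈ B) (hUT : ¬ U ⊆ T)
    {k : Fin m} (hk : k ∈ U) (hkS : ¬ U ⊆ S → k ∉ S) : k ∉ T := by
  obtain ⟨x, hx⟩ := minFace_nonempty hB hS
  obtain ⟨y, hy, rfl⟩ := mem_nestohedron.1 hx.1
  have hy' : ∀ W ∈ B, Function.update y U (Pi.single k 1) W ∈ simplexOn W := fun W hW => by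
    rcases eq_or_ne W U with rfl | hWU
    · simpa using single_mem_simplexOn hk
    · simpa [hWU] using hy W hW
  have hmem : ∑ W ∈ B, Function.update y U (Pi.single k 1) W ∈ minFace m B S := by
    refine (sum_mem_minFace_iff hy').2 fun W hW hWS i hi => ?_
    rcases eq_or_ne W U with rfl | hWU
    · simp [ne_of_mem_of_not_mem hi (hkS hWS)]
    · simpa [hWU] using (sum_mem_minFace_iff hy).1 hx W hW hWS i hi
  intro hkT
  simpa using (sum_mem_minFace_iff hy').1 (h hmem) U hU hUT k hkT

theorem eq_of_minFace_subset (hB : IsConnectedBuildingSet m B) (hS : S ∈ B)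
    (hT : T ∈ B.erase Finset.univ) (h : minFace m B S ⊆ minFace m B T) : S = T := by
  obtain ⟨hTuniv, hTB⟩ := Finset.mem_erase.1 hT
  have hTS : T ⊆ S := fun k hkT => by_contra fun hkS =>
    notMem_of_minFace_subset hB hS h hB.ground_mem (mt Finset.univ_subset_iff.1 hTuniv)
      (Finset.mem_univ k) (fun _ => hkS) hkT
  obtain ⟨k, hk⟩ := hB.nonempty_mem T hTB
  refine hTS.antisymm' (by_contra fun hST => ?_)
  exact notMem_of_minFace_subset hB hS h hS hST (hTS hk) (absurd subset_rfl) hk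

theorem isFaceOf_minFace (hB : IsConnectedBuildingSet m B) (hS : S ∈ B) :
    IsFaceOf (minFace m B S) (nestohedron m B) :=
  ⟨minFace_nonempty hB hS, fun _ => ⟨LinearMap.toContinuousLinearMap (-coordSum S), by
    ext x; simp [minFace]⟩⟩

theorem minFace_ne_nestohedron (hB : IsConnectedBuildingSet m B) (hS : S ∈ B.erase Finset.univ) :
    minFace m B S ≠ nestohedron m B := fun h =>
  (Finset.mem_erase.1 hS).1
    (eq_of_minFace_subset hB hB.ground_mem hS (h ▸ fun _ hx => hx.1)).symm

theorem exists_subset_minFace (hB : IsConnectedBuildingSet m B) {F : Set (Fin m → ℝ)}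
    (hF : IsFaceOf F (nestohedron m B)) (hne : F ≠ nestohedron m B) :
    ∃ T ∈ B.erase Finset.univ, F ⊆ minFace m B T := by
  classical
  obtain ⟨l, hl⟩ := hF.2 hF.1
  have hmax {y : Finset (Fin m) → Fin m → ℝ} (hy : ∀ U ∈ B, y U ∈ simplexOn U) :=
    isMaxOn_nestohedron_iff (l := l.toLinearMap) hy
  let W : Finset (Fin m) := {i | ∀ j, l (Pi.single j 1) ≤ l (Pi.single i 1)}
  obtain ⟨j, hjW⟩ : ∃ j, j ∉ W := by
    by_contra! h
    refine hne (hF.2.subset.antisymm fun x hx => ?_)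
    obtain ⟨y, hy, rfl⟩ := mem_nestohedron.1 hx
    rw [hl]
    exact ⟨hx, (hmax hy).2 fun _ _ i _ k _ hlt =>
      absurd ((Finset.mem_filter.1 (h i)).2 k) hlt.not_ge⟩
  obtain ⟨T, hTB, hTW, hT⟩ := IsBuildingSetOn.exists_maximal_disjoint hB (Finset.mem_univ j) hjW
  have hTuniv : T ≠ Finset.univ := by
    rintro rfl
    obtain ⟨i, -, hi⟩ := Finset.univ.exists_max_image (fun i => l (Pi.single i 1)) ⟨j, by simp⟩
    exact Finset.disjoint_left.1 hTW (Finset.mem_univ i) (by simpa [W] using hi)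
  refine ⟨T, Finset.mem_erase.2 ⟨hTuniv, hTB⟩, fun x hx => ?_⟩
  rw [hl] at hx
  obtain ⟨y, hy, rfl⟩ := mem_nestohedron.1 hx.1
  refine (sum_mem_minFace_iff hy).2 fun U hU hUT i hiT => ?_
  by_cases hiU : i ∈ U
  · obtain ⟨k, hkU, hkW⟩ :=
      Finset.not_disjoint_iff.1 (hT U hU hUT (Finset.not_disjoint_iff.2 ⟨i, hiU, hiT⟩))
    obtain ⟨r, hr⟩ : ∃ r, l (Pi.single i 1) < l (Pi.single r 1) := by
      simpa [W] using Finset.disjoint_left.1 hTW hiT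
    exact (hmax hy).1 hx.2 U hU i hiU k hkU (hr.trans_le ((Finset.mem_filter.1 hkW).2 r))
  · exact eq_zero_of_mem_simplexOn (hy U hU) hiU

theorem isPolytope_nestohedron (B : Finset (Finset (Fin m))) : IsPolytope (nestohedron m B) := by
  classical
  refine Finset.sum_induction _ IsPolytope ?_ ⟨{0}, by simp [Set.singleton_zero]⟩ fun S _ =>
    ⟨S.image fun i => Pi.single i 1, by simp⟩
  rintro _ _ ⟨V, rfl⟩ ⟨W, rfl⟩
  exact ⟨V + W, by rw [Finset.coe_add, convexHull_add]⟩

theorem isFacetOf_nestohedron_iff (hB : IsConnectedBuildingSet m B) {F : Set (Fin m → ℝ)} :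
    IsFacetOf F (nestohedron m B) ↔ ∃ S ∈ B.erase Finset.univ, F = minFace m B S := by
  let face {S} (hS : S ∈ B.erase Finset.univ) : Face (nestohedron m B) :=
    ⟨minFace m B S, isFaceOf_minFace hB (Finset.mem_of_mem_erase hS)⟩
  have : Nonempty (nestohedron m B) :=
    Face.nonempty ⟨_, isFaceOf_minFace hB hB.ground_mem⟩
  have hface {S} (hS : S ∈ B.erase Finset.univ) : face hS ≠ ⊤ :=
    mt Face.eq_top_iff.1 (minFace_ne_nestohedron hB hS)
  have hexists (G : Face (nestohedron m B)) (hG : G ≠ ⊤) : ∃ S, ∃ hS, G ≤ face (S := S) hS := by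
    obtain ⟨S, hS, hGS⟩ := exists_subset_minFace hB G.2 (mt Face.eq_top_iff.2 hG)
    exact ⟨S, hS, hGS⟩
  constructor
  · intro hF
    have hcoatom := IsFacetOf.isCoatom (F := ⟨F, hF.1⟩) hF
    obtain ⟨S, hS, hle⟩ := hexists _ hcoatom.1
    exact ⟨S, hS, Set.Subset.antisymm hle ((isCoatom_iff_ge_of_le.1 hcoatom).2 _ (hface hS) hle)⟩
  · rintro ⟨S, hS, rfl⟩
    refine ((isPolytope_nestohedron B).isFacetOf_iff_isCoatom (F := face hS)).2
      (isCoatom_iff_ge_of_le.2 ⟨hface hS, fun G hG hle => ?_⟩)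
    obtain ⟨T, hT, hGT⟩ := hexists G hG
    obtain rfl := eq_of_minFace_subset hB (Finset.mem_of_mem_erase hS) hT (hle.trans hGT)
    exact hGT

theorem exists_equiv_facet_nestohedron (hB : IsConnectedBuildingSet m B) :
    ∃ e : {S // S ∈ B.erase Finset.univ} ≃ Facet (nestohedron m B),
      ∀ S T, ((e S).1 ∩ (e T).1).Nonempty ↔ NestedCompat B S.1 T.1 := by
  refine ⟨Equiv.ofBijective
    (fun S => ⟨minFace m B S.1, (isFacetOf_nestohedron_iff hB).2 ⟨S.1, S.2, rfl⟩⟩)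
    ⟨fun S T h => Subtype.ext ?_, fun F => ?_⟩, fun S T => ?_⟩
  · exact eq_of_minFace_subset hB (Finset.mem_of_mem_erase S.2) T.2 (Subtype.ext_iff.1 h).subset
  · obtain ⟨S, hS, hF⟩ := (isFacetOf_nestohedron_iff hB).1 F.2
    exact ⟨⟨S, hS⟩, Subtype.ext hF.symm⟩
  · exact minFace_inter_nonempty_iff hB (Finset.mem_of_mem_erase S.2) (Finset.mem_of_mem_erase T.2)

end Nestohedron

section TypeDModel

theorem crosses_of_lt {N j k l : ℕ} (a : ZMod N) (hj : 0 < j) (hjk : j < k) (hkl : k < l)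
    (hlN : l < N) : Crosses N {a, a + k} {a + j, a + l} := by
  have : NeZero N := ⟨by omega⟩
  have hval {i : ℕ} (hi : i < N) {x : ZMod N} (hx : x = i) : x.val = i :=
    hx ▸ ZMod.val_cast_of_lt hi
  have hN : (N : ZMod N) = 0 := ZMod.natCast_self N
  refine ⟨a, a + k, a + j, a + l, rfl, rfl, ?_, ?_⟩
  · rw [StrictBtw, hval (i := j) (by omega) (by ring), hval (i := k) (by omega) (by ring)]
    exact ⟨hj, hjk⟩
  · rw [StrictBtw, hval (i := l - k) (by omega) (by rw [Nat.cast_sub hkl.le]; ring),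
      hval (i := N - k) (by omega) (by rw [Nat.cast_sub (by omega), hN]; ring)]
    omega

theorem IsDiag.exists_eq_pair {N : ℕ} [NeZero N] {e : Finset (ZMod N)} (he : IsDiag N e) :
    ∃ (x : ZMod N) (k : ℕ), e = {x, x + k} ∧ 2 ≤ k ∧ k + 2 ≤ N := by
  obtain ⟨x, y, rfl, h0, h1, h2⟩ := he
  obtain ⟨k, hkN, rfl⟩ : ∃ k < N, y = x + (k : ZMod N) :=
    ⟨(y - x).val, ZMod.val_lt _, by rw [ZMod.natCast_zmod_val]; ring⟩
  have hk0 : k ≠ 0 := by rintro rfl; simp at h0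
  have hk1 : k ≠ 1 := by rintro rfl; simp at h1
  have hkpred : k + 1 ≠ N := fun h => h2 <| by
    have hcast : (k : ZMod N) + 1 = 0 := by rw [← Nat.cast_add_one, h, ZMod.natCast_self]
    rw [eq_neg_of_add_eq_zero_left hcast, sub_eq_add_neg]
  exact ⟨x, k, rfl, by omega, by omega⟩

theorem isDiag_pair {N k : ℕ} (x : ZMod N) (hk : 2 ≤ k) (hkN : k + 2 ≤ N) :
    IsDiag N {x, x + k} := by
  have hne {i : ℕ} (hi : 0 < i) (hiN : i < N) : (i : ZMod N) ≠ 0 := fun h =>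
    Nat.not_dvd_of_pos_of_lt hi hiN ((ZMod.natCast_eq_zero_iff i N).1 h)
  refine ⟨x, x + k, rfl, ?_, fun h => ?_, fun h => ?_⟩
  · simpa using hne (i := k) (by omega) (by omega)
  · refine hne (i := k - 1) (by omega) (by omega) ?_
    rw [Nat.cast_sub (by omega), Nat.cast_one]
    linear_combination h
  · refine hne (i := k + 1) (by omega) (by omega) ?_
    push_cast
    linear_combination h

variable {n : ℕ}

theorem crosses_diameter_of_lt {k : ℕ} (x : ZMod (2 * n)) (hk : 2 ≤ k) (hkn : k < n) :
    Crosses (2 * n) {x + 1, x + 1 + (n : ZMod (2 * n))} {x, x + k} := by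
  have h := crosses_of_lt (N := 2 * n) (j := k - 1) (k := n) (l := 2 * n - 1) (x + 1)
    (by omega) (by omega) (by omega) (by omega)
  rw [Nat.cast_sub (by omega), Nat.cast_sub (by omega), ZMod.natCast_self, Nat.cast_one,
    zero_sub, add_neg_cancel_right, add_add_sub_cancel] at h
  rwa [Finset.pair_comm x]

theorem exists_diameter_crosses [NeZero n] {e : Finset (ZMod (2 * n))} (he : IsDiag (2 * n) e)
    (hdiam : ¬ IsDiameter n e) : ∃ c, Crosses (2 * n) {c, c + (n : ZMod (2 * n))} e := by
  obtain ⟨x, k, rfl, hk2, hkn⟩ := he.exists_eq_pair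
  have hne : k ≠ n := by rintro rfl; exact hdiam ⟨x, rfl⟩
  rcases hne.lt_or_gt with hlt | hgt
  · exact ⟨x + 1, crosses_diameter_of_lt x hk2 hlt⟩
  · refine ⟨x + k + 1, ?_⟩
    have h := crosses_diameter_of_lt (n := n) (k := 2 * n - k) (x + k) (by omega) (by omega)
    rwa [Nat.cast_sub (by omega), ZMod.natCast_self, zero_sub, add_neg_cancel_right,
      Finset.pair_comm _ x] at h

/-- The type of diameters of the `2n`-gon. -/
abbrev Diameter (n : ℕ) := {e : Finset (ZMod (2 * n)) // IsDiag (2 * n) e ∧ IsDiameter n e}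

theorem isDiag_of_isDiameter (hn : 2 ≤ n) {e : Finset (ZMod (2 * n))} (he : IsDiameter n e) :
    IsDiag (2 * n) e := by
  obtain ⟨a, rfl⟩ := he
  exact isDiag_pair a hn (by omega)

theorem le_card_diameter (hn : 2 ≤ n) [Fintype (Diameter n)] : n ≤ Fintype.card (Diameter n) := by
  have hdiam (j : ZMod (2 * n)) : IsDiameter n {j, j + (n : ZMod (2 * n))} := ⟨j, rfl⟩
  let f (j : Fin n) : Diameter n := ⟨{(j.val : ZMod (2 * n)), j.val + (n : ZMod (2 * n))},
    isDiag_of_isDiameter hn (hdiam _), hdiam _⟩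
  have hf : f.Injective := fun i j hij => by
    have hmem : ((i : ℕ) : ZMod (2 * n)) ∈ (f j).1 := hij ▸ Finset.mem_insert_self _ _
    have hval {k : ℕ} (hk : k < 2 * n) (h : ((i : ℕ) : ZMod (2 * n)) = k) : (i : ℕ) = k := by
      rwa [ZMod.natCast_eq_natCast_iff', Nat.mod_eq_of_lt (by omega), Nat.mod_eq_of_lt hk] at h
    rcases Finset.mem_insert.1 hmem with h | h
    · exact Fin.ext (hval (by omega) h)
    · have := hval (k := j + n) (by omega) (by simpa using h)
      omega
  simpa using Fintype.card_le_of_injective f hf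

/-- The red copy of a diameter, as an element of the type `D_n` model. -/
def Diameter.red (a : Diameter n) : MSet n := ⟨.red a.1, a.2⟩

/-- The blue copy of a diameter, as an element of the type `D_n` model. -/
def Diameter.blue (a : Diameter n) : MSet n := ⟨.blue a.1, a.2⟩

theorem isDiameterLabelling_of_equiv {m : ℕ} {V : Finset (Fin m)} {B : Finset (Finset (Fin m))}
    (hn : 2 ≤ n) (e : MSet n ≃ {S // S ∈ B.erase V})
    (he : ∀ x y, x ≠ y → (NestedCompat B (e x).1 (e y).1 ↔ DCompat n x.1 y.1)) :
    IsDiameterLabelling V B (fun a : Diameter n => (e a.red).1) (fun a => (e a.blue).1) where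
  red_mem a := (e a.red).2
  blue_mem a := (e a.blue).2
  red_compat_red a c := by
    rcases eq_or_ne a.red c.red with h | h
    · exact h ▸ .refl B _
    · exact (he _ _ h).2 trivial
  blue_compat_blue a c := by
    rcases eq_or_ne a.blue c.blue with h | h
    · exact h ▸ .refl B _
    · exact (he _ _ h).2 trivial
  red_compat_blue_iff a c := by
    have hne : a.red ≠ c.blue := fun h => by cases congrArg Subtype.val h
    exact (he _ _ hne).trans Subtype.ext_iff.symm
  trichotomy S hS := by
    obtain ⟨⟨x | x | x, hx⟩, hSx⟩ := e.surjective ⟨S, hS⟩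
    · obtain rfl : (e ⟨.pair x, hx⟩).1 = S := congrArg Subtype.val hSx
      have hred (a : Diameter n) := he ⟨.pair x, hx⟩ a.red fun h => by cases congrArg Subtype.val h
      have hblue (a : Diameter n) :=
        he ⟨.pair x, hx⟩ a.blue fun h => by cases congrArg Subtype.val h
      obtain ⟨d, hd, hdiam, rfl⟩ := hx
      have : NeZero n := ⟨by omega⟩
      obtain ⟨c, hc⟩ := exists_diameter_crosses hd hdiam
      have hc' : IsDiameter n {c, c + (n : ZMod (2 * n))} := ⟨c, rfl⟩
      exact .inr <| .inr ⟨fun a => (hred a).trans (hblue a).symm,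
        ⟨_, isDiag_of_isDiameter hn hc', hc'⟩,
        fun h => (hred _).1 h d (Finset.mem_insert_self _ _) hc⟩
    · exact .inl ⟨⟨x, hx⟩, congrArg Subtype.val hSx.symm⟩
    · exact .inr <| .inl ⟨⟨x, hx⟩, congrArg Subtype.val hSx.symm⟩

end TypeDModel

theorem typeD_not_nestohedron_general {n d : ℕ} (hn : 4 ≤ n) {P : Set (Fin d → ℝ)}
    (hP : IsPolytope P) {φ : MSet n → Set (Fin d → ℝ)} (hfacet : ∀ x, IsFacetOf (φ x) P)
    (hinj : Function.Injective φ) (hsurj : ∀ F, IsFacetOf F P → ∃ x, φ x = F)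
    (hcompat : ∀ x y, x ≠ y → ((φ x ∩ φ y).Nonempty ↔ DCompat n x.1 y.1)) :
    ¬ ∃ (m : ℕ) (B : Finset (Finset (Fin m))),
        IsConnectedBuildingSet m B ∧ CombEquiv P (nestohedron m B) := by
  rintro ⟨m, B, hB, hPB⟩
  let toFacet (x : MSet n) : Facet P := ⟨φ x, hfacet x⟩
  have htoFacet : toFacet.Bijective :=
    ⟨fun x y h => hinj (congrArg Subtype.val h),
      fun F => (hsurj F.1 F.2).imp fun _ hx => Subtype.ext hx⟩
  obtain ⟨e, he⟩ := hPB.exists_facet_equiv hP (isPolytope_nestohedron B)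
  obtain ⟨f, hf⟩ := exists_equiv_facet_nestohedron hB
  let σ : MSet n ≃ {S // S ∈ B.erase Finset.univ} :=
    (Equiv.ofBijective toFacet htoFacet).trans (e.trans f.symm)
  have hσ (x y : MSet n) (hxy : x ≠ y) :
      NestedCompat B (σ x).1 (σ y).1 ↔ DCompat n x.1 y.1 := by
    rw [← hf, ← hcompat x y hxy]
    simpa [σ] using he (toFacet x) (toFacet y)
  have : NeZero n := ⟨by omega⟩
  have := Fintype.ofFinite (Diameter n)
  exact hB.not_isDiameterLabelling (hn.trans (le_card_diameter (by omega)))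
    (isDiameterLabelling_of_equiv (by omega) σ hσ)

/-- generalized associahedra of type `D_n` are not nestohedra for `n ≥ 4`. -/
theorem typeD_not_nestohedron (n d : ℕ) (hn : 4 ≤ n) (P : Set (Fin d → ℝ))
    (hP : RealizesD n P) :
    ¬ ∃ (m : ℕ) (B : Finset (Finset (Fin m))),
        IsConnectedBuildingSet m B ∧ CombEquiv P (nestohedron m B) := by
  obtain ⟨φ, hpoly, -, -, hfacet, hinj, hsurj, hcompat⟩ := hP
  exact typeD_not_nestohedron_general hn hpoly hfacet hinj hsurj hcompat

end GalD
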